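/- Fix k ≥ 1, π ∈ (0,1), and 0 < Δ < log(2) / log(1 + π²/(2^k − 1)) (a threshold of order 2^k log(2)/π²), and for each n ≥ k let m = ⌈Δ n⌉. Then the minimax testing risk inf_ψ max( P_unif(ψ = 1), P_{planted,π}(ψ = 0) ), where the infimum runs over all functions ψ from m-tuples of k-flats of F_2^n to {0,1}, tends to 1/2 as n → ∞. -/

import Mathlib

open scoped BigOperators Classical
open Filter Topology

abbrev F2n (n : ℕ) := Fin n → ZMod 2

def IsFlat (n k : ℕ) (W : Set (F2n n)) : Prop :=
  ∃ A : AffineSubspace (ZMod 2) (F2n n),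
    (A : Set (F2n n)) = W ∧ W.Nonempty ∧ Module.finrank (ZMod 2) A.direction = n - k

def Flat (n k : ℕ) : Type := {W : Set (F2n n) // IsFlat n k W}

noncomputable instance (n k : ℕ) : Fintype (Flat n k) := by
  unfold Flat; exact Fintype.ofFinite _

noncomputable def q0 (n k : ℕ) : Flat n k → ℝ :=
  fun _ => (Fintype.card (Flat n k) : ℝ)⁻¹

noncomputable def qx (n k : ℕ) (x : F2n n) : Flat n k → ℝ :=
  fun W => if x ∈ W.1 then 0 else (Nat.card {W : Flat n k // x ∉ W.1} : ℝ)⁻¹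

noncomputable def prob {α : Type*} [Fintype α] (p : α → ℝ) (E : Set α) : ℝ :=
  ∑ a, if a ∈ E then p a else 0

noncomputable def expect {α : Type*} [Fintype α] (p : α → ℝ) (f : α → ℝ) : ℝ :=
  ∑ a, p a * f a

noncomputable def Punif (n k m : ℕ) : (Fin m → Flat n k) → ℝ :=
  fun V => ∏ j, q0 n k (V j)

noncomputable def Pplanted (n k m : ℕ) : (Fin m → Flat n k) → ℝ :=
  fun V => ((2:ℝ)^n)⁻¹ * ∑ x : F2n n, ∏ j, qx n k x (V j)

noncomputable def Z (n k m : ℕ) (V : Fin m → Flat n k) : ℕ :=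
  Nat.card {x : F2n n // ∀ j, x ∉ (V j).1}

noncomputable def satCount (n k m : ℕ) (V : Fin m → Flat n k) (x : F2n n) : ℕ :=
  Nat.card {j : Fin m // x ∉ (V j).1}

noncomputable def maxSat (n k m : ℕ) (V : Fin m → Flat n k) : ℕ :=
  Finset.univ.sup (fun x : F2n n => satCount n k m V x)

noncomputable def qxpi (n k : ℕ) (x : F2n n) (π : ℝ) : Flat n k → ℝ :=
  fun W => (1 - π) * q0 n k W + π * qx n k x W

noncomputable def Pplantedpi (n k m : ℕ) (π : ℝ) : (Fin m → Flat n k) → ℝ :=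
  fun V => ((2:ℝ)^n)⁻¹ * ∑ x : F2n n, ∏ j, qxpi n k x π (V j)

noncomputable def DeltaK (k : ℕ) : ℝ :=
  Real.log (1/2) / Real.log (1 - ((2:ℝ)^k)⁻¹)

/-!
The statement is a second moment computation. Relative to `q0`, the density of `qx x` is `1 + s x`,
where the score `s x` equals `-1` on the flats through `x` and `1 / (2 ^ k - 1)` on the others. All
flats have the same size, so the scores of a fixed flat sum to zero over the points; the affine
group acts doubly transitively on points, so the covariance of `s x` and `s y` takes only two
values, `1 / (2 ^ k - 1)` for `x = y` and hence `-1 / ((2 ^ k - 1) * (2 ^ n - 1))` for `x ≠ y`.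
Distinct points are thus negatively correlated, and the `χ²`-divergence of the planted law from the
uniform one is at most `2 ^ (-n) * (1 + π ^ 2 / (2 ^ k - 1)) ^ m`, which tends to zero below the
threshold. The two laws then cannot be told apart in total variation, while some set of samples has
uniform probability close to `1 / 2`.
-/

section Tests

variable {α : Type*} [Fintype α]

/-- The risk of a test of `P` against `Q`: the larger of its two error probabilities. -/
noncomputable def testRisk (P Q : α → ℝ) (ψ : α → Bool) : ℝ :=
  max (prob P {a | ψ a = true}) (prob Q {a | ψ a = false})

/-- The minimax risk of testing `P` against `Q`: the infimum of the risk over all tests. -/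
noncomputable def minimaxRisk (P Q : α → ℝ) : ℝ :=
  ⨅ ψ : α → Bool, testRisk P Q ψ

lemma prob_add_prob_compl (P : α → ℝ) (E : Set α) : prob P E + prob P Eᶜ = ∑ a, P a := by
  rw [prob, prob, ← Finset.sum_add_distrib]
  refine Finset.sum_congr rfl fun a _ => ?_
  by_cases ha : a ∈ E <;> simp [ha]

lemma abs_prob_sub_prob_le (P Q : α → ℝ) (E : Set α) :
    |prob Q E - prob P E| ≤ ∑ a, |Q a - P a| := by
  rw [prob, prob, ← Finset.sum_sub_distrib]
  refine (Finset.abs_sum_le_sum_abs _ _).trans (Finset.sum_le_sum fun a _ => ?_)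
  by_cases ha : a ∈ E <;> simp [ha]

lemma le_testRisk {P Q : α → ℝ} (hQ : ∑ a, Q a = 1) (ψ : α → Bool) :
    (1 - ∑ a, |Q a - P a|) / 2 ≤ testRisk P Q ψ := by
  have hfalse : {a | ψ a = false} = {a | ψ a = true}ᶜ := by ext a; simp
  have hcompl := prob_add_prob_compl Q {a | ψ a = true}
  have hdiff := (abs_le.1 (abs_prob_sub_prob_le P Q {a | ψ a = true})).2
  rw [← hfalse] at hcompl
  rw [testRisk]
  linarith [le_max_left (prob P {a | ψ a = true}) (prob Q {a | ψ a = false}),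
    le_max_right (prob P {a | ψ a = true}) (prob Q {a | ψ a = false})]

lemma le_minimaxRisk {P Q : α → ℝ} (hQ : ∑ a, Q a = 1) :
    (1 - ∑ a, |Q a - P a|) / 2 ≤ minimaxRisk P Q :=
  le_ciInf (le_testRisk hQ)

lemma minimaxRisk_le {P Q : α → ℝ} (hQ : ∑ a, Q a = 1) (E : Set α) :
    minimaxRisk P Q ≤ max (prob P E) (prob Q Eᶜ) := by
  have hbdd : BddBelow (Set.range (testRisk P Q)) := ⟨_, Set.forall_mem_range.2 (le_testRisk hQ)⟩
  refine (ciInf_le hbdd fun a => decide (a ∈ E)).trans_eq ?_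
  simp only [testRisk, decide_eq_true_eq, decide_eq_false_iff_not]
  rfl

lemma exists_abs_prob_sub_half_le [Nonempty α] {P : α → ℝ}
    (hP : ∀ a, P a = (Fintype.card α : ℝ)⁻¹) :
    ∃ E : Set α, |prob P E - 1 / 2| ≤ (Fintype.card α : ℝ)⁻¹ := by
  obtain ⟨s, -, hs⟩ := Finset.exists_subset_card_eq (s := (Finset.univ : Finset α))
    (n := Fintype.card α / 2) (by simpa using Nat.div_le_self _ _)
  have hcard : (0 : ℝ) < Fintype.card α := by exact_mod_cast Fintype.card_pos
  have hprob : prob P s = (Fintype.card α : ℝ)⁻¹ * (Fintype.card α / 2 : ℕ) := by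
    simp [prob, hP, ← hs, mul_comm]
  have hle : ((Fintype.card α / 2 : ℕ) : ℝ) ≤ Fintype.card α / 2 := Nat.cast_div_le
  have hge : (Fintype.card α : ℝ) / 2 ≤ (Fintype.card α / 2 : ℕ) + 1 := by
    have : (Fintype.card α : ℝ) ≤ 2 * ((Fintype.card α / 2 : ℕ) + 1) := by
      exact_mod_cast (by omega : Fintype.card α ≤ 2 * (Fintype.card α / 2 + 1))
    linarith
  refine ⟨s, ?_⟩
  calc |prob P s - 1 / 2|
      = (Fintype.card α : ℝ)⁻¹ * |((Fintype.card α / 2 : ℕ) : ℝ) - Fintype.card α / 2| := by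
        rw [hprob, ← abs_of_pos (inv_pos.2 hcard), ← abs_mul, abs_of_pos (inv_pos.2 hcard),
          mul_sub]
        congr 2
        field_simp
    _ ≤ (Fintype.card α : ℝ)⁻¹ :=
        mul_le_of_le_one_right (inv_pos.2 hcard).le (abs_le.2 ⟨by linarith, by linarith⟩)

lemma abs_minimaxRisk_sub_half_le [Nonempty α] {P Q : α → ℝ}
    (hP : ∀ a, P a = (Fintype.card α : ℝ)⁻¹) (hQ : ∑ a, Q a = 1) :
    |minimaxRisk P Q - 1 / 2| ≤ (Fintype.card α : ℝ)⁻¹ + ∑ a, |Q a - P a| := by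
  obtain ⟨E, hE⟩ := exists_abs_prob_sub_half_le hP
  have hlower := le_minimaxRisk (P := P) hQ
  have hupper := minimaxRisk_le (P := P) hQ E
  have hcompl := prob_add_prob_compl Q E
  have hdiff := abs_le.1 (abs_prob_sub_prob_le P Q E)
  have hinv : (0 : ℝ) ≤ (Fintype.card α : ℝ)⁻¹ := by positivity
  have hnonneg : 0 ≤ ∑ a, |Q a - P a| := Finset.sum_nonneg fun a _ => abs_nonneg _
  rw [abs_le] at hE ⊢
  refine ⟨by linarith, sub_le_iff_le_add.2 (hupper.trans (max_le ?_ ?_))⟩ <;> linarith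

lemma sum_abs_mul_sub_le_sqrt {P L : α → ℝ} (hP0 : ∀ a, 0 ≤ P a) (hP : ∑ a, P a = 1) :
    ∑ a, |P a * L a - P a| ≤ √(∑ a, P a * (L a - 1) ^ 2) := by
  refine Real.le_sqrt_of_sq_le ?_
  have hjensen := Real.pow_arith_mean_le_arith_mean_pow_of_even Finset.univ P
    (fun a => |L a - 1|) (fun a _ => hP0 a) hP even_two
  simp only [sq_abs] at hjensen
  refine le_trans (le_of_eq ?_) hjensen
  congr! 2 with a
  rw [← mul_sub_one, abs_mul, abs_of_nonneg (hP0 a)]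

end Tests

section Mixtures

variable {α X : Type*} [Fintype α] [Fintype X]

/-- The likelihood ratio, evaluated at the sample `V`, between the uniform mixture over `x` of the
`m`-fold product laws with densities `L x` and the product of the reference law. -/
noncomputable def mixtureLikelihood (L : X → α → ℝ) {m : ℕ} (V : Fin m → α) : ℝ :=
  (Fintype.card X : ℝ)⁻¹ * ∑ x, ∏ j, L x (V j)

lemma sum_prod_mul_mixtureLikelihood [Nonempty X] {q : α → ℝ} {L : X → α → ℝ}
    (hL : ∀ x, ∑ a, q a * L x a = 1) (m : ℕ) :
    ∑ V : Fin m → α, (∏ j, q (V j)) * mixtureLikelihood L V = 1 := by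
  have hcard : (Fintype.card X : ℝ) ≠ 0 := by exact_mod_cast Fintype.card_ne_zero
  calc ∑ V : Fin m → α, (∏ j, q (V j)) * mixtureLikelihood L V
      = (Fintype.card X : ℝ)⁻¹ * ∑ x, ∑ V : Fin m → α, ∏ j, q (V j) * L x (V j) := by
        rw [Finset.sum_comm, Finset.mul_sum]
        refine Finset.sum_congr rfl fun V _ => ?_
        simp only [mixtureLikelihood, Finset.prod_mul_distrib, ← Finset.mul_sum]
        ring
    _ = 1 := by
        rw [Finset.sum_congr rfl fun x _ => (Fintype.sum_pow (fun a => q a * L x a) m).symm]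
        simp [hL, hcard]

lemma sum_prod_mul_mixtureLikelihood_sq (q : α → ℝ) (L : X → α → ℝ) (m : ℕ) :
    ∑ V : Fin m → α, (∏ j, q (V j)) * mixtureLikelihood L V ^ 2
      = (Fintype.card X : ℝ)⁻¹ ^ 2 * ∑ x, ∑ y, (∑ a, q a * (L x a * L y a)) ^ m := by
  simp only [Fintype.sum_pow]
  simp_rw [Finset.sum_comm (t := (Finset.univ : Finset (Fin m → α)))]
  rw [Finset.mul_sum]
  refine Finset.sum_congr rfl fun V _ => ?_
  rw [mixtureLikelihood, mul_pow, sq (Finset.sum _ _), Finset.sum_mul_sum]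
  simp only [Finset.prod_mul_distrib, ← Finset.mul_sum]
  ring

lemma sum_prod_mul_mixtureLikelihood_sq_le [Nonempty X] {q : α → ℝ} {L : X → α → ℝ} {ρ : ℝ}
    (hq0 : ∀ a, 0 ≤ q a) (hself : ∀ x, ∑ a, q a * (L x a * L x a) ≤ ρ)
    (hne : ∀ x y, x ≠ y → |∑ a, q a * (L x a * L y a)| ≤ 1) (m : ℕ) :
    ∑ V : Fin m → α, (∏ j, q (V j)) * mixtureLikelihood L V ^ 2
      ≤ 1 + (Fintype.card X : ℝ)⁻¹ * ρ ^ m := by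
  have hoverlap : ∀ x y, (∑ a, q a * (L x a * L y a)) ^ m ≤ 1 + if x = y then ρ ^ m else 0 := by
    intro x y
    split_ifs with hxy
    · subst hxy
      have hnonneg : 0 ≤ ∑ a, q a * (L x a * L x a) :=
        Finset.sum_nonneg fun a _ => mul_nonneg (hq0 a) (mul_self_nonneg _)
      linarith [pow_le_pow_left₀ hnonneg (hself x) m]
    · rw [add_zero]
      exact (le_abs_self _).trans
        ((abs_pow _ m).trans_le (pow_le_one₀ (abs_nonneg _) (hne x y hxy)))
  rw [sum_prod_mul_mixtureLikelihood_sq]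
  calc (Fintype.card X : ℝ)⁻¹ ^ 2 * ∑ x, ∑ y, (∑ a, q a * (L x a * L y a)) ^ m
      ≤ (Fintype.card X : ℝ)⁻¹ ^ 2 * ∑ x : X, ∑ y : X, (1 + if x = y then ρ ^ m else 0) := by
        gcongr with x _ y _
        exact hoverlap x y
    _ = 1 + (Fintype.card X : ℝ)⁻¹ * ρ ^ m := by
        simp only [Finset.sum_add_distrib, Finset.sum_ite_eq, Finset.mem_univ, if_true,
          Finset.sum_const, Finset.card_univ, nsmul_eq_mul, mul_one]
        field_simp

lemma sum_prod_mul_mixtureLikelihood_sub_one_sq_le [Nonempty X] {q : α → ℝ} {L : X → α → ℝ}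
    {ρ : ℝ} (hq0 : ∀ a, 0 ≤ q a) (hq : ∑ a, q a = 1) (hL : ∀ x, ∑ a, q a * L x a = 1)
    (hself : ∀ x, ∑ a, q a * (L x a * L x a) ≤ ρ)
    (hne : ∀ x y, x ≠ y → |∑ a, q a * (L x a * L y a)| ≤ 1) (m : ℕ) :
    ∑ V : Fin m → α, (∏ j, q (V j)) * (mixtureLikelihood L V - 1) ^ 2
      ≤ (Fintype.card X : ℝ)⁻¹ * ρ ^ m := by
  calc ∑ V : Fin m → α, (∏ j, q (V j)) * (mixtureLikelihood L V - 1) ^ 2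
      = ∑ V : Fin m → α, (∏ j, q (V j)) * mixtureLikelihood L V ^ 2
          - 2 * ∑ V : Fin m → α, (∏ j, q (V j)) * mixtureLikelihood L V
          + ∑ V : Fin m → α, ∏ j, q (V j) := by
        rw [Finset.mul_sum, ← Finset.sum_sub_distrib, ← Finset.sum_add_distrib]
        exact Finset.sum_congr rfl fun V _ => by ring
    _ ≤ (Fintype.card X : ℝ)⁻¹ * ρ ^ m := by
        rw [sum_prod_mul_mixtureLikelihood hL, ← Fintype.sum_pow, hq, one_pow]
        linarith [sum_prod_mul_mixtureLikelihood_sq_le hq0 hself hne m]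

end Mixtures

section AffineTransitivity

variable {K V P : Type*} [DivisionRing K] [AddCommGroup V] [Module K V] [AddTorsor V P]

lemma exists_linearEquiv_apply_eq {u v : V} (hu : u ≠ 0) (hv : v ≠ 0) :
    ∃ g : V ≃ₗ[K] V, g u = v := by
  let eu := LinearEquiv.toSpanNonzeroSingleton K V u hu
  let ev := LinearEquiv.toSpanNonzeroSingleton K V v hv
  obtain ⟨g, hg⟩ := Submodule.exists_linearEquiv_restrict_eq (eu.symm.trans ev)
  refine ⟨g, ?_⟩
  have hone : (ev 1 : V) = g (eu 1) := by simpa using hg (eu 1)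
  simpa [eu, ev] using hone.symm

lemma exists_affineEquiv_apply_eq_apply_eq {x y x' y' : P} (hxy : x ≠ y) (hxy' : x' ≠ y') :
    ∃ e : P ≃ᵃ[K] P, e x = x' ∧ e y = y' := by
  obtain ⟨g, hg⟩ := exists_linearEquiv_apply_eq (K := K)
    (vsub_ne_zero.2 hxy.symm) (vsub_ne_zero.2 hxy'.symm)
  refine ⟨(AffineEquiv.vaddConst K x).symm.trans
    (g.toAffineEquiv.trans (AffineEquiv.vaddConst K x')), ?_, ?_⟩ <;> simp [hg]

end AffineTransitivity

section Flats

variable {n k : ℕ}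

lemma IsFlat.image (e : F2n n ≃ᵃ[ZMod 2] F2n n) {W : Set (F2n n)} (hW : IsFlat n k W) :
    IsFlat n k (e '' W) := by
  obtain ⟨A, rfl, hne, hdim⟩ := hW
  refine ⟨A.map e.toAffineMap, by simp, hne.image _, ?_⟩
  rw [AffineSubspace.map_direction, ← hdim]
  exact LinearEquiv.finrank_map_eq e.linear A.direction

/-- The action of an affine automorphism on flats, by direct image. -/
noncomputable def Flat.congr (e : F2n n ≃ᵃ[ZMod 2] F2n n) : Flat n k ≃ Flat n k where
  toFun W := ⟨e '' W.1, W.2.image e⟩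
  invFun W := ⟨e.symm '' W.1, W.2.image e.symm⟩
  left_inv W := Subtype.ext (by simp [Set.preimage_image_eq _ e.injective])
  right_inv W := Subtype.ext (by simp [Set.image_preimage_eq _ e.surjective])

lemma Flat.apply_mem_congr_iff (e : F2n n ≃ᵃ[ZMod 2] F2n n) (W : Flat n k) (x : F2n n) :
    e x ∈ (Flat.congr e W).1 ↔ x ∈ W.1 :=
  e.injective.mem_set_image

lemma Flat.card_filter_mem (W : Flat n k) :
    (Finset.univ.filter fun x => x ∈ W.1).card = 2 ^ (n - k) := by
  obtain ⟨_, A, rfl, ⟨p, hp⟩, hdim⟩ := W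
  rw [← Fintype.card_subtype]
  calc Fintype.card A = Fintype.card A.direction :=
        have : Nonempty A := ⟨⟨p, hp⟩⟩
        Fintype.card_congr (Equiv.vaddConst (⟨p, hp⟩ : A)).symm
    _ = 2 ^ (n - k) := by rw [Module.card_eq_pow_finrank (K := ZMod 2), hdim, ZMod.card]

instance Flat.instNonempty (n k : ℕ) : Nonempty (Flat n k) := by
  obtain ⟨v, hv⟩ := exists_linearIndependent_of_le_finrank (R := ZMod 2) (M := F2n n)
    (n := n - k) (by simp)
  let S := Submodule.span (ZMod 2) (Set.range v)
  refine ⟨⟨S.toAffineSubspace, S.toAffineSubspace, rfl, ⟨0, by simp⟩, ?_⟩⟩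
  rw [Submodule.toAffineSubspace_direction]
  simpa [S] using finrank_span_eq_card hv

lemma sum_q0 (n k : ℕ) : ∑ W, q0 n k W = 1 := by
  simp [q0]

/-- The centred likelihood ratio `qx n k x / q0 n k - 1`, see `qx_eq_q0_mul`. -/
noncomputable def flatScore (n k : ℕ) (x : F2n n) (W : Flat n k) : ℝ :=
  if x ∈ W.1 then -1 else ((2 : ℝ) ^ k - 1)⁻¹

/-- The covariance under `q0 n k` of the scores of two points. -/
noncomputable def flatCov (n k : ℕ) (x y : F2n n) : ℝ :=
  ∑ W, q0 n k W * (flatScore n k x W * flatScore n k y W)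

lemma flatScore_congr (e : F2n n ≃ᵃ[ZMod 2] F2n n) (x : F2n n) (W : Flat n k) :
    flatScore n k (e x) (Flat.congr e W) = flatScore n k x W := by
  simp only [flatScore, Flat.apply_mem_congr_iff]

lemma flatCov_congr (e : F2n n ≃ᵃ[ZMod 2] F2n n) (x y : F2n n) :
    flatCov n k (e x) (e y) = flatCov n k x y := by
  rw [flatCov, ← Equiv.sum_comp (Flat.congr e)]
  simp only [flatScore_congr]
  rfl

lemma two_pow_sub_one_pos (hk : 1 ≤ k) : (0 : ℝ) < 2 ^ k - 1 :=
  sub_pos.2 (one_lt_pow₀ one_lt_two (Nat.one_le_iff_ne_zero.1 hk))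

lemma sum_flatScore_points (hk : 1 ≤ k) (hkn : k ≤ n) (W : Flat n k) :
    ∑ x, flatScore n k x W = 0 := by
  have hpow : (2 : ℝ) ^ n = 2 ^ (n - k) * 2 ^ k := by rw [← pow_add, Nat.sub_add_cancel hkn]
  have hne : (2 : ℝ) ^ k - 1 ≠ 0 := (two_pow_sub_one_pos hk).ne'
  have hindicator : ∀ x, flatScore n k x W
      = ((2 : ℝ) ^ k - 1)⁻¹ - (1 + ((2 : ℝ) ^ k - 1)⁻¹) * if x ∈ W.1 then 1 else 0 := by
    intro x
    by_cases hx : x ∈ W.1 <;> simp [flatScore, hx]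
  simp only [hindicator, Finset.sum_sub_distrib, ← Finset.mul_sum, Finset.sum_boole,
    W.card_filter_mem, Finset.sum_const, Finset.card_univ, Fintype.card_fun, ZMod.card,
    Fintype.card_fin, nsmul_eq_mul, Nat.cast_pow, Nat.cast_ofNat, hpow]
  field_simp
  ring

lemma sum_flatScore_flats (hk : 1 ≤ k) (hkn : k ≤ n) (x : F2n n) :
    ∑ W, flatScore n k x W = 0 := by
  have htranslate : ∀ y, ∑ W, flatScore n k y W = ∑ W, flatScore n k x W := fun y => by
    rw [← Equiv.sum_comp (Flat.congr (AffineEquiv.constVAdd (ZMod 2) (F2n n) (y - x)))]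
    refine Finset.sum_congr rfl fun W _ => ?_
    rw [← flatScore_congr (AffineEquiv.constVAdd (ZMod 2) (F2n n) (y - x)) x W]
    simp
  have hsum : ∑ y : F2n n, ∑ W, flatScore n k y W = 0 := by
    rw [Finset.sum_comm]
    exact Finset.sum_eq_zero fun W _ => sum_flatScore_points hk hkn W
  simpa [htranslate] using hsum

lemma flatCov_self (hk : 1 ≤ k) (hkn : k ≤ n) (x : F2n n) :
    flatCov n k x x = ((2 : ℝ) ^ k - 1)⁻¹ := by
  set c := ((2 : ℝ) ^ k - 1)⁻¹ with hc
  -- A variable with the two values `-1` and `c` is a root of `(t + 1) * (t - c)`.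
  have hquad : ∀ W, flatScore n k x W * flatScore n k x W = c + (c - 1) * flatScore n k x W := by
    intro W
    by_cases hx : x ∈ W.1 <;> simp only [flatScore, hx, if_true, if_false, ← hc] <;> ring
  calc flatCov n k x x
      = (Fintype.card (Flat n k) : ℝ)⁻¹ * ∑ W, (c + (c - 1) * flatScore n k x W) := by
        simp only [flatCov, q0, hquad, Finset.mul_sum]
    _ = c := by
        rw [Finset.sum_add_distrib, ← Finset.mul_sum, sum_flatScore_flats hk hkn]
        simp

lemma sum_flatCov (hk : 1 ≤ k) (hkn : k ≤ n) (x : F2n n) : ∑ y, flatCov n k x y = 0 := by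
  simp only [flatCov]
  rw [Finset.sum_comm]
  simp only [← Finset.mul_sum, sum_flatScore_points hk hkn, mul_zero, Finset.sum_const_zero]

lemma flatCov_of_ne (hk : 1 ≤ k) (hkn : k ≤ n) {x y : F2n n} (hxy : x ≠ y) :
    flatCov n k x y = -(((2 : ℝ) ^ k - 1) * (2 ^ n - 1))⁻¹ := by
  have hconst : ∀ z ∈ Finset.univ.erase x, flatCov n k x z = flatCov n k x y := by
    intro z hz
    obtain ⟨e, he, rfl⟩ := exists_affineEquiv_apply_eq_apply_eq (K := ZMod 2) hxy
      (Finset.ne_of_mem_erase hz).symm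
    simpa only [he] using flatCov_congr e x y
  have hrow := sum_flatCov hk hkn x
  rw [← Finset.sum_erase_add _ _ (Finset.mem_univ x), Finset.sum_congr rfl hconst,
    flatCov_self hk hkn] at hrow
  simp only [Finset.sum_const, Finset.card_erase_of_mem, Finset.mem_univ, Finset.card_univ,
    Fintype.card_fun, ZMod.card, Fintype.card_fin, nsmul_eq_mul, Nat.cast_sub Nat.one_le_two_pow,
    Nat.cast_pow, Nat.cast_ofNat, Nat.cast_one] at hrow
  have hn : (2 : ℝ) ^ n - 1 ≠ 0 := (two_pow_sub_one_pos (hk.trans hkn)).ne'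
  rw [mul_inv, ← neg_mul, ← div_eq_mul_inv, eq_div_iff hn]
  linarith

lemma card_flat_eq (hk : 1 ≤ k) (hkn : k ≤ n) (x : F2n n) :
    (Fintype.card (Flat n k) : ℝ)
      = (1 + ((2 : ℝ) ^ k - 1)⁻¹) * Nat.card {W : Flat n k // x ∉ W.1} := by
  have hindicator : ∀ W, flatScore n k x W
      = (1 + ((2 : ℝ) ^ k - 1)⁻¹) * (if x ∉ W.1 then 1 else 0) - 1 := by
    intro W
    by_cases hx : x ∈ W.1 <;> simp [flatScore, hx]
  have hsum := sum_flatScore_flats hk hkn x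
  simp only [hindicator, Finset.sum_sub_distrib, ← Finset.mul_sum, Finset.sum_boole,
    Finset.sum_const, Finset.card_univ, nsmul_eq_mul, mul_one] at hsum
  rw [Nat.card_eq_fintype_card, Fintype.card_subtype]
  linarith

lemma two_le_card_flat (hk : 1 ≤ k) (hkn : k ≤ n) : 2 ≤ Fintype.card (Flat n k) := by
  have hc : 0 < ((2 : ℝ) ^ k - 1)⁻¹ := inv_pos.2 (two_pow_sub_one_pos hk)
  have hcard := card_flat_eq hk hkn 0
  have hpos : 0 < Nat.card {W : Flat n k // (0 : F2n n) ∉ W.1} := by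
    refine Nat.pos_of_ne_zero fun hzero => ?_
    rw [hzero, Nat.cast_zero, mul_zero] at hcard
    exact Fintype.card_ne_zero (Nat.cast_eq_zero.1 hcard)
  have hlt : Nat.card {W : Flat n k // (0 : F2n n) ∉ W.1} < Fintype.card (Flat n k) := by
    rify at hpos ⊢
    rw [hcard]
    nlinarith
  omega

/-- The density of `qxpi n k x π` relative to `q0 n k`, see `qxpi_eq_q0_mul_plantedDensity`. -/
noncomputable def plantedDensity (n k : ℕ) (π : ℝ) (x : F2n n) (W : Flat n k) : ℝ :=
  1 + π * flatScore n k x W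

lemma qx_eq_q0_mul (hk : 1 ≤ k) (hkn : k ≤ n) (x : F2n n) (W : Flat n k) :
    qx n k x W = q0 n k W * (1 + flatScore n k x W) := by
  have hc : 1 + ((2 : ℝ) ^ k - 1)⁻¹ ≠ 0 :=
    (add_pos one_pos (inv_pos.2 (two_pow_sub_one_pos hk))).ne'
  rw [qx, q0, flatScore, card_flat_eq hk hkn x]
  split_ifs
  · ring
  · rw [mul_inv, mul_comm _⁻¹, inv_mul_cancel_right₀ hc]

lemma qxpi_eq_q0_mul_plantedDensity (hk : 1 ≤ k) (hkn : k ≤ n) (π : ℝ) (x : F2n n)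
    (W : Flat n k) : qxpi n k x π W = q0 n k W * plantedDensity n k π x W := by
  rw [qxpi, qx_eq_q0_mul hk hkn, plantedDensity]
  ring

lemma sum_q0_mul_flatScore (hk : 1 ≤ k) (hkn : k ≤ n) (x : F2n n) :
    ∑ W, q0 n k W * flatScore n k x W = 0 := by
  simp only [q0, ← Finset.mul_sum, sum_flatScore_flats hk hkn, mul_zero]

lemma sum_q0_mul_plantedDensity (hk : 1 ≤ k) (hkn : k ≤ n) (π : ℝ) (x : F2n n) :
    ∑ W, q0 n k W * plantedDensity n k π x W = 1 := by
  simp only [plantedDensity, mul_add, mul_one, mul_left_comm _ π, Finset.sum_add_distrib,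
    ← Finset.mul_sum, sum_q0, sum_q0_mul_flatScore hk hkn, mul_zero, add_zero]

lemma sum_q0_mul_plantedDensity_mul (hk : 1 ≤ k) (hkn : k ≤ n) (π : ℝ) (x y : F2n n) :
    ∑ W, q0 n k W * (plantedDensity n k π x W * plantedDensity n k π y W)
      = 1 + π ^ 2 * flatCov n k x y := by
  have hexpand : ∀ W, q0 n k W * (plantedDensity n k π x W * plantedDensity n k π y W)
      = q0 n k W + π * (q0 n k W * flatScore n k x W) + π * (q0 n k W * flatScore n k y W)
        + π ^ 2 * (q0 n k W * (flatScore n k x W * flatScore n k y W)) := fun W => by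
    rw [plantedDensity, plantedDensity]
    ring
  simp only [hexpand, Finset.sum_add_distrib, ← Finset.mul_sum, sum_q0,
    sum_q0_mul_flatScore hk hkn, mul_zero, add_zero, flatCov]

lemma sum_q0_mul_plantedDensity_mul_self (hk : 1 ≤ k) (hkn : k ≤ n) (π : ℝ) (x : F2n n) :
    ∑ W, q0 n k W * (plantedDensity n k π x W * plantedDensity n k π x W)
      = 1 + π ^ 2 / (2 ^ k - 1) := by
  rw [sum_q0_mul_plantedDensity_mul hk hkn, flatCov_self hk hkn, div_eq_mul_inv]

lemma abs_sum_q0_mul_plantedDensity_mul_le_one (hk : 1 ≤ k) (hkn : k ≤ n) {π : ℝ}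
    (hπ : π ^ 2 ≤ ((2 : ℝ) ^ k - 1) * (2 ^ n - 1)) {x y : F2n n} (hxy : x ≠ y) :
    |∑ W, q0 n k W * (plantedDensity n k π x W * plantedDensity n k π y W)| ≤ 1 := by
  have hprod : 0 ≤ ((2 : ℝ) ^ k - 1) * (2 ^ n - 1) := (sq_nonneg π).trans hπ
  have hratio_nonneg : 0 ≤ π ^ 2 / (((2 : ℝ) ^ k - 1) * (2 ^ n - 1)) :=
    div_nonneg (sq_nonneg π) hprod
  have hratio_le : π ^ 2 / (((2 : ℝ) ^ k - 1) * (2 ^ n - 1)) ≤ 1 := div_le_one_of_le₀ hπ hprod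
  rw [sum_q0_mul_plantedDensity_mul hk hkn, flatCov_of_ne hk hkn hxy, mul_neg,
    ← div_eq_mul_inv, abs_le]
  constructor <;> linarith

lemma Pplantedpi_eq_mul_mixtureLikelihood (hk : 1 ≤ k) (hkn : k ≤ n) (π : ℝ) {m : ℕ}
    (V : Fin m → Flat n k) :
    Pplantedpi n k m π V
      = Punif n k m V * mixtureLikelihood (plantedDensity n k π) V := by
  simp only [Pplantedpi, Punif, mixtureLikelihood, qxpi_eq_q0_mul_plantedDensity hk hkn,
    Finset.prod_mul_distrib, ← Finset.mul_sum, Fintype.card_fun, ZMod.card, Fintype.card_fin,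
    Nat.cast_pow, Nat.cast_ofNat]
  ring

lemma Punif_eq_inv_card {m : ℕ} (V : Fin m → Flat n k) :
    Punif n k m V = (Fintype.card (Fin m → Flat n k) : ℝ)⁻¹ := by
  simp [Punif, q0]

lemma sum_Punif (n k m : ℕ) : ∑ V, Punif n k m V = 1 := by
  simp only [Punif, ← Fintype.sum_pow, sum_q0, one_pow]

lemma sum_Pplantedpi (hk : 1 ≤ k) (hkn : k ≤ n) (π : ℝ) (m : ℕ) :
    ∑ V, Pplantedpi n k m π V = 1 := by
  simp only [Pplantedpi_eq_mul_mixtureLikelihood hk hkn]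
  exact sum_prod_mul_mixtureLikelihood (sum_q0_mul_plantedDensity hk hkn π) m

lemma sum_abs_Pplantedpi_sub_Punif_le (hk : 1 ≤ k) (hkn : k ≤ n) {π : ℝ}
    (hπ : π ^ 2 ≤ ((2 : ℝ) ^ k - 1) * (2 ^ n - 1)) (m : ℕ) :
    ∑ V, |Pplantedpi n k m π V - Punif n k m V|
      ≤ √(((2 : ℝ) ^ n)⁻¹ * (1 + π ^ 2 / (2 ^ k - 1)) ^ m) := by
  have hq0 : ∀ W, 0 ≤ q0 n k W := fun W => inv_nonneg.2 (Nat.cast_nonneg _)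
  have hPunif : ∀ V, 0 ≤ Punif n k m V := fun V => Finset.prod_nonneg fun j _ => hq0 (V j)
  have hchi := sum_prod_mul_mixtureLikelihood_sub_one_sq_le hq0 (sum_q0 n k)
    (sum_q0_mul_plantedDensity hk hkn π)
    (fun x => (sum_q0_mul_plantedDensity_mul_self hk hkn π x).le)
    (fun x y => abs_sum_q0_mul_plantedDensity_mul_le_one hk hkn hπ) m
  simp only [Pplantedpi_eq_mul_mixtureLikelihood hk hkn]
  refine (sum_abs_mul_sub_le_sqrt hPunif (sum_Punif n k m)).trans (Real.sqrt_le_sqrt ?_)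
  simpa [Punif] using hchi

lemma abs_minimaxRisk_Punif_Pplantedpi_sub_half_le (hk : 1 ≤ k) (hkn : k ≤ n) {π : ℝ}
    (hπ : π ^ 2 ≤ ((2 : ℝ) ^ k - 1) * (2 ^ n - 1)) (m : ℕ) :
    |minimaxRisk (Punif n k m) (Pplantedpi n k m π) - 1 / 2|
      ≤ ((2 : ℝ) ^ m)⁻¹ + √(((2 : ℝ) ^ n)⁻¹ * (1 + π ^ 2 / (2 ^ k - 1)) ^ m) := by
  refine (abs_minimaxRisk_sub_half_le Punif_eq_inv_card (sum_Pplantedpi hk hkn π m)).trans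
    (add_le_add ?_ (sum_abs_Pplantedpi_sub_Punif_le hk hkn hπ m))
  rw [Fintype.card_fun, Fintype.card_fin, Nat.cast_pow]
  gcongr
  exact_mod_cast two_le_card_flat hk hkn

end Flats

section Asymptotics

lemma tendsto_natCeil_mul_natCast_atTop {Δ : ℝ} (hΔ : 0 < Δ) :
    Tendsto (fun n : ℕ => ⌈Δ * n⌉₊) atTop atTop :=
  tendsto_nat_ceil_atTop.comp (tendsto_natCast_atTop_atTop.const_mul_atTop hΔ)

lemma tendsto_inv_pow_mul_pow_natCeil {b ρ Δ : ℝ} (hρ : 1 ≤ ρ) (hΔ : 0 ≤ Δ) (hb : ρ ^ Δ < b) :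
    Tendsto (fun n : ℕ => (b ^ n)⁻¹ * ρ ^ ⌈Δ * n⌉₊) atTop (𝓝 0) := by
  have hρ0 : 0 < ρ := one_pos.trans_le hρ
  have hb0 : 0 < b := (Real.rpow_pos_of_pos hρ0 Δ).trans hb
  have hgeom : Tendsto (fun n : ℕ => ρ * (ρ ^ Δ / b) ^ n) atTop (𝓝 0) := by
    simpa using (tendsto_pow_atTop_nhds_zero_of_lt_one (by positivity)
      ((div_lt_one hb0).2 hb)).const_mul ρ
  refine squeeze_zero (fun n => by positivity) (fun n => ?_) hgeom
  calc (b ^ n)⁻¹ * ρ ^ ⌈Δ * n⌉₊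
      ≤ (b ^ n)⁻¹ * ρ ^ (Δ * n + 1) := by
        rw [← Real.rpow_natCast ρ]
        gcongr
        exact (Nat.ceil_lt_add_one (by positivity)).le
    _ = ρ * (ρ ^ Δ / b) ^ n := by
        rw [Real.rpow_add hρ0, Real.rpow_mul hρ0.le, Real.rpow_natCast, Real.rpow_one, div_pow]
        ring

end Asymptotics

/-- For `π` outside `[1 - 2 ^ k, 1]` the planted law is a signed measure of total mass one. -/
theorem stmt18_general (k : ℕ) (hk : 1 ≤ k) (π : ℝ) (hπ : π ≠ 0) (Δ : ℝ) (hΔ0 : 0 < Δ)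
    (hΔ : Δ < Real.log 2 / Real.log (1 + π ^ 2 / ((2 : ℝ) ^ k - 1))) :
    Tendsto (fun n : ℕ =>
        ⨅ ψ : (Fin ⌈Δ * (n:ℝ)⌉₊ → Flat n k) → Bool,
          max (prob (Punif n k ⌈Δ * (n:ℝ)⌉₊) {V | ψ V = true})
              (prob (Pplantedpi n k ⌈Δ * (n:ℝ)⌉₊ π) {V | ψ V = false}))
      atTop (nhds (1 / 2)) := by
  have hgap : 0 < (2 : ℝ) ^ k - 1 := two_pow_sub_one_pos hk
  have hρ : 1 < 1 + π ^ 2 / ((2 : ℝ) ^ k - 1) := lt_add_of_pos_right 1 (by positivity)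
  have hchi := tendsto_inv_pow_mul_pow_natCeil hρ.le hΔ0.le
    ((Real.lt_logb_iff_rpow_lt hρ two_pos).1 hΔ)
  have hatom : Tendsto (fun n : ℕ => ((2 : ℝ) ^ ⌈Δ * n⌉₊)⁻¹) atTop (𝓝 0) :=
    (tendsto_pow_atTop_atTop_of_one_lt one_lt_two).inv_tendsto_atTop.comp
      (tendsto_natCeil_mul_natCast_atTop hΔ0)
  have hlarge : ∀ᶠ n : ℕ in atTop, π ^ 2 ≤ ((2 : ℝ) ^ k - 1) * (2 ^ n - 1) :=
    ((tendsto_atTop_add_const_right _ (-1)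
      (tendsto_pow_atTop_atTop_of_one_lt one_lt_two)).const_mul_atTop hgap).eventually_ge_atTop _
  rw [tendsto_iff_norm_sub_tendsto_zero]
  have hbound := hatom.add hchi.sqrt
  rw [Real.sqrt_zero, add_zero] at hbound
  refine squeeze_zero' (.of_forall fun n => norm_nonneg _) ?_ hbound
  filter_upwards [eventually_ge_atTop k, hlarge] with n hkn hn
  exact abs_minimaxRisk_Punif_Pplantedpi_sub_half_le hk hkn hn _

theorem stmt18 (k : ℕ) (hk : 1 ≤ k) (π : ℝ) (hπ0 : 0 < π) (hπ1 : π < 1)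
    (Δ : ℝ) (hΔ0 : 0 < Δ)
    (hΔ : Δ < Real.log 2 / Real.log (1 + π^2 / ((2:ℝ)^k - 1))) :
    Tendsto (fun n : ℕ =>
        ⨅ ψ : (Fin ⌈Δ * (n:ℝ)⌉₊ → Flat n k) → Bool,
          max (prob (Punif n k ⌈Δ * (n:ℝ)⌉₊) {V | ψ V = true})
              (prob (Pplantedpi n k ⌈Δ * (n:ℝ)⌉₊ π) {V | ψ V = false}))
      atTop (nhds (1/2)) :=
  stmt18_general k hk π hπ0.ne' Δ hΔ0 hΔ
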